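/- arXiv:0908.3108 — 2 statements merged into one kernel-verified Lean document; each statement's English description precedes it below -/
import Mathlib

section
/- (Proposition 4.2) In the Gaussian observation model ω = Ax + ξ with ξ ∼ N(0, I_L), where X ⊆ ℝⁿ is convex compact, A is an L×n matrix and g ∈ ℝⁿ, for every ε ∈ (0, 1/2) one can build an affine estimate ĝ_ε such that Risk(ĝ_ε; ε) ≤ [ErfInv(ε/2)/ErfInv(ε)]·Risk_*(ε). Specifically, with Ψ(x, y; φ) = gᵀx − gᵀy + φᵀA(y − x) + 2·ErfInv(ε/2)·‖φ‖₂ on (X×X)×ℝ^L, the saddle-point value 2Ψ_*(ε) = inf_φ max_{x,y∈X} Ψ(x, y; φ) is attained at some φ_*, and the affine estimate ĝ_ε(ω) = φ_*ᵀω + c_* with c_* = (1/2)[max_{x∈X}(gᵀx − φ_*ᵀAx) − max_{y∈X}(−gᵀy + φ_*ᵀAy)] satisfies Risk(ĝ_ε; ε) ≤ Ψ_*(ε) ≤ [ErfInv(ε/2)/ErfInv(ε)]·Risk_*(ε); note that ErfInv(ε/2)/ErfInv(ε) < √(2·ln(2/ε))/ErfInv(ε). -/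
open MeasureTheory Real Matrix Set Filter
open scoped ENNReal Topology

/-- The standard Gaussian `N(0, I_L)` density on `ℝ^L`. -/
noncomputable def stdGaussDensity {L : ℕ} (ω : Fin L → ℝ) : ℝ :=
  (2 * Real.pi) ^ (-(L : ℝ) / 2) * Real.exp (-(∑ i, ω i ^ 2) / 2)

/-- The distribution `N(Ax, I_L)` of the observation `ω = Ax + ξ`, `ξ ∼ N(0, I_L)`. -/
noncomputable def gaussObs {L n : ℕ} (A : Matrix (Fin L) (Fin n) ℝ) (x : Fin n → ℝ) :
    Measure (Fin L → ℝ) :=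
  volume.withDensity fun ω => ENNReal.ofReal (stdGaussDensity (ω - A.mulVec x))

/-- The Euclidean norm `‖v‖₂` on `ℝ^L`. -/
noncomputable def euclNorm {L : ℕ} (v : Fin L → ℝ) : ℝ :=
  Real.sqrt (∑ i, v i ^ 2)

/-- The `ε`-risk of an estimate `ghat` in the Gaussian observation model. -/
noncomputable def gaussRisk {L n : ℕ} (A : Matrix (Fin L) (Fin n) ℝ)
    (g : Fin n → ℝ) (X : Set (Fin n → ℝ)) (ghat : (Fin L → ℝ) → ℝ) (ε : ℝ) : ℝ :=
  sInf {δ : ℝ |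
    (⨆ x ∈ X, gaussObs A x {ω | δ < |ghat ω - g ⬝ᵥ x|}) < ENNReal.ofReal ε}

/-- The minimax optimal `ε`-risk over all Borel estimates in the Gaussian model. -/
noncomputable def gaussRiskStar {L n : ℕ} (A : Matrix (Fin L) (Fin n) ℝ)
    (g : Fin n → ℝ) (X : Set (Fin n → ℝ)) (ε : ℝ) : ℝ :=
  sInf {ρ : ℝ | ∃ ghat : (Fin L → ℝ) → ℝ, Measurable ghat ∧
    ρ = gaussRisk A g X ghat ε}

/-- The function `Φ_r(x, y; φ, α)` of the Gaussian model (with linear `φ`). -/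
noncomputable def gaussPhi {L n : ℕ} (A : Matrix (Fin L) (Fin n) ℝ) (g : Fin n → ℝ)
    (r : ℝ) (x y : Fin n → ℝ) (φ : Fin L → ℝ) (α : ℝ) : ℝ :=
  g ⬝ᵥ x - g ⬝ᵥ y
    + α * Real.log (∫ ω : Fin L → ℝ,
        Real.exp (-(φ ⬝ᵥ ω) / α) * stdGaussDensity (ω - A.mulVec x))
    + α * Real.log (∫ ω : Fin L → ℝ,
        Real.exp ((φ ⬝ᵥ ω) / α) * stdGaussDensity (ω - A.mulVec y))
    + 2 * α * r

/-- `Φ_*(r)`: `2Φ_*(r) = sup_{x,y∈X} inf_{φ∈ℝ^L, α>0} Φ_r(x,y;φ,α)`. -/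
noncomputable def gaussPhiStar {L n : ℕ} (A : Matrix (Fin L) (Fin n) ℝ)
    (g : Fin n → ℝ) (X : Set (Fin n → ℝ)) (r : ℝ) : ℝ :=
  (1/2) * sSup {v : ℝ | ∃ x ∈ X, ∃ y ∈ X,
    v = sInf {w : ℝ | ∃ φ : Fin L → ℝ, ∃ α : ℝ, 0 < α ∧
      w = gaussPhi A g r x y φ α}}

/-- The standard Gaussian upper tail probability `y = (1/√(2π)) ∫_x^∞ e^{−t²/2} dt`. -/
noncomputable def gaussTail (x : ℝ) : ℝ :=
  (Real.sqrt (2 * Real.pi))⁻¹ * ∫ t in Set.Ioi x, Real.exp (-t ^ 2 / 2)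

/-- The inverse error function `ErfInv`: for `y ∈ (0, 1/2)`, `ErfInv y` is the
unique `x` with `gaussTail x = y` (realized here as an infimum). -/
noncomputable def erfInv (y : ℝ) : ℝ :=
  sInf {x : ℝ | gaussTail x ≤ y}

/-- The function `Ψ(x, y; φ) = gᵀx − gᵀy + φᵀA(y − x) + 2·ErfInv(ε/2)·‖φ‖₂`. -/
noncomputable def PsiFun {L n : ℕ} (A : Matrix (Fin L) (Fin n) ℝ) (g : Fin n → ℝ)
    (ε : ℝ) (x y : Fin n → ℝ) (φ : Fin L → ℝ) : ℝ :=
  g ⬝ᵥ x - g ⬝ᵥ y + φ ⬝ᵥ A.mulVec (y - x) + 2 * erfInv (ε / 2) * euclNorm φ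

/-- `Ψ̄(φ) = max_{x,y∈X} Ψ(x, y; φ)`. -/
noncomputable def PsiBar {L n : ℕ} (A : Matrix (Fin L) (Fin n) ℝ) (g : Fin n → ℝ)
    (ε : ℝ) (X : Set (Fin n → ℝ)) (φ : Fin L → ℝ) : ℝ :=
  sSup {v : ℝ | ∃ x ∈ X, ∃ y ∈ X, v = PsiFun A g ε x y φ}

/-- `Ψ_*(ε) = (1/2)·inf_φ Ψ̄(φ)`. -/
noncomputable def PsiStar {L n : ℕ} (A : Matrix (Fin L) (Fin n) ℝ) (g : Fin n → ℝ)
    (ε : ℝ) (X : Set (Fin n → ℝ)) : ℝ :=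
  (1/2) * sInf {v : ℝ | ∃ φ : Fin L → ℝ, v = PsiBar A g ε X φ}

/-- The centering constant
`c_* = (1/2)[max_{x∈X}(gᵀx − φᵀAx) − max_{y∈X}(−gᵀy + φᵀAy)]`. -/
noncomputable def cStar {L n : ℕ} (A : Matrix (Fin L) (Fin n) ℝ) (g : Fin n → ℝ)
    (X : Set (Fin n → ℝ)) (φ : Fin L → ℝ) : ℝ :=
  (1/2) * (sSup {v : ℝ | ∃ x ∈ X, v = g ⬝ᵥ x - φ ⬝ᵥ A.mulVec x}
    - sSup {v : ℝ | ∃ y ∈ X, v = -(g ⬝ᵥ y) + φ ⬝ᵥ A.mulVec y})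

section GaussTail

lemma integrable_exp_neg_sq_half : Integrable fun t : ℝ => Real.exp (-t ^ 2 / 2) := by
  have h := integrable_exp_neg_mul_sq (b := 1 / 2) (by norm_num)
  refine h.congr (Eventually.of_forall fun t => ?_)
  simp only
  ring_nf

lemma integral_Ioi_zero_exp_neg_sq_half :
    ∫ t in Ioi (0 : ℝ), Real.exp (-t ^ 2 / 2) = √(2 * π) / 2 := by
  have h := integral_gaussian_Ioi (1 / 2)
  rw [show π / (1 / 2) = 2 * π by ring] at h
  rw [← h]
  refine integral_congr_ae (Eventually.of_forall fun t => ?_)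
  simp only
  ring_nf

lemma gaussTail_zero : gaussTail 0 = 1 / 2 := by
  have : √(2 * π) ≠ 0 := by positivity
  rw [gaussTail, integral_Ioi_zero_exp_neg_sq_half]
  field_simp

lemma gaussTail_eq_sub_intervalIntegral (x : ℝ) :
    gaussTail x = 1 / 2 - (√(2 * π))⁻¹ * ∫ t in (0 : ℝ)..x, Real.exp (-t ^ 2 / 2) := by
  rw [← gaussTail_zero, gaussTail, gaussTail,
    intervalIntegral.integral_Ioi_sub_Ioi' integrable_exp_neg_sq_half.integrableOn
      integrable_exp_neg_sq_half.integrableOn |>.symm]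
  ring

lemma continuous_gaussTail : Continuous gaussTail := by
  rw [funext gaussTail_eq_sub_intervalIntegral]
  have := intervalIntegral.continuous_primitive
    (fun a b => integrable_exp_neg_sq_half.intervalIntegrable (a := a) (b := b)) 0
  fun_prop

lemma strictAnti_gaussTail : StrictAnti gaussTail := by
  intro x y hxy
  have hpos : 0 < ∫ t in x..y, Real.exp (-t ^ 2 / 2) :=
    intervalIntegral.intervalIntegral_pos_of_pos integrable_exp_neg_sq_half.intervalIntegrable
      (fun t => Real.exp_pos _) hxy
  rw [← intervalIntegral.integral_Ioi_sub_Ioi' integrable_exp_neg_sq_half.integrableOn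
    integrable_exp_neg_sq_half.integrableOn] at hpos
  exact mul_lt_mul_of_pos_left (by linarith) (by positivity)

lemma gaussTail_le_half_mul_exp {x : ℝ} (hx : 0 ≤ x) :
    gaussTail x ≤ 1 / 2 * Real.exp (-x ^ 2 / 2) := by
  have hshift : ∫ t in Ioi x, Real.exp (-t ^ 2 / 2)
      = ∫ s in Ioi (0 : ℝ), Real.exp (-(s + x) ^ 2 / 2) := by
    have h := (measurePreserving_add_right volume x).setIntegral_preimage_emb
      (measurableEmbedding_addRight x) (fun t : ℝ => Real.exp (-t ^ 2 / 2)) (Ioi x)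
    rw [← h]
    simp
  have hle : ∫ s in Ioi (0 : ℝ), Real.exp (-(s + x) ^ 2 / 2)
      ≤ ∫ s in Ioi (0 : ℝ), Real.exp (-x ^ 2 / 2) * Real.exp (-s ^ 2 / 2) := by
    refine setIntegral_mono_on ?_ (integrable_exp_neg_sq_half.const_mul _).integrableOn
      measurableSet_Ioi fun s hs => ?_
    · exact (integrable_exp_neg_sq_half.comp_add_right x).integrableOn
    · rw [← Real.exp_add, Real.exp_le_exp]
      nlinarith [mul_nonneg hx (le_of_lt (mem_Ioi.mp hs))]
  rw [integral_const_mul, integral_Ioi_zero_exp_neg_sq_half, ← hshift] at hle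
  have hs : 0 < √(2 * π) := by positivity
  rw [gaussTail]
  calc (√(2 * π))⁻¹ * ∫ t in Ioi x, Real.exp (-t ^ 2 / 2)
      ≤ (√(2 * π))⁻¹ * (Real.exp (-x ^ 2 / 2) * (√(2 * π) / 2)) := by gcongr
    _ = 1 / 2 * Real.exp (-x ^ 2 / 2) := by field_simp

lemma erfInv_gaussTail (x : ℝ) : erfInv (gaussTail x) = x := by
  have : {z : ℝ | gaussTail z ≤ gaussTail x} = Ici x := by
    ext z
    exact strictAnti_gaussTail.le_iff_ge
  rw [erfInv, this, csInf_Ici]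

lemma exists_gaussTail_eq {y : ℝ} (hy : 0 < y) (hy' : y < 1 / 2) :
    ∃ x, 0 < x ∧ x < √(2 * Real.log (1 / y)) ∧ gaussTail x = y := by
  have hlog : 0 < Real.log (1 / y) := Real.log_pos (by rw [lt_div_iff₀ hy]; linarith)
  set T := √(2 * Real.log (1 / y)) with hT
  have hT0 : 0 < T := Real.sqrt_pos.mpr (by linarith)
  have hsq : T ^ 2 = 2 * Real.log (1 / y) := Real.sq_sqrt (by linarith)
  have hTy : gaussTail T < y := by
    have h := gaussTail_le_half_mul_exp hT0.le
    have he : Real.exp (-T ^ 2 / 2) = y := by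
      rw [hsq, show -(2 * Real.log (1 / y)) / 2 = Real.log y by
        rw [one_div, Real.log_inv]; ring, Real.exp_log hy]
    rw [he] at h
    linarith
  obtain ⟨x, hx, hxy⟩ := intermediate_value_Ioo' hT0.le continuous_gaussTail.continuousOn
    (show y ∈ Ioo (gaussTail T) (gaussTail 0) from ⟨hTy, by rwa [gaussTail_zero]⟩)
  exact ⟨x, hx.1, hx.2, hxy⟩

lemma gaussTail_erfInv {y : ℝ} (hy : 0 < y) (hy' : y < 1 / 2) : gaussTail (erfInv y) = y := by
  obtain ⟨x, -, -, rfl⟩ := exists_gaussTail_eq hy hy'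
  rw [erfInv_gaussTail]

lemma erfInv_pos {y : ℝ} (hy : 0 < y) (hy' : y < 1 / 2) : 0 < erfInv y := by
  obtain ⟨x, hx, -, rfl⟩ := exists_gaussTail_eq hy hy'
  rwa [erfInv_gaussTail]

lemma erfInv_lt_sqrt {y : ℝ} (hy : 0 < y) (hy' : y < 1 / 2) :
    erfInv y < √(2 * Real.log (1 / y)) := by
  obtain ⟨x, -, hx, rfl⟩ := exists_gaussTail_eq hy hy'
  rwa [erfInv_gaussTail]

end GaussTail

section GaussianMeasure

open ProbabilityTheory

lemma gaussianReal_zero_one_Ioi (x : ℝ) :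
    gaussianReal 0 1 (Ioi x) = ENNReal.ofReal (gaussTail x) := by
  rw [gaussianReal_apply_eq_integral 0 one_ne_zero, gaussTail, ← integral_const_mul]
  congr 1
  refine integral_congr_ae (Eventually.of_forall fun t => ?_)
  simp [gaussianPDFReal]

lemma gaussianReal_eq_map_standard (μ c : ℝ) :
    gaussianReal μ (c ^ 2).toNNReal = (gaussianReal 0 1).map fun z => μ + c * z := by
  have h : (fun z : ℝ => μ + c * z) = (fun z => μ + z) ∘ fun z => c * z := rfl
  rw [h, ← Measure.map_map (by fun_prop) (by fun_prop), gaussianReal_map_const_mul,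
    gaussianReal_map_const_add]
  congr 1
  · simp
  · ext; simp [sq_nonneg]

lemma gaussianReal_Ioi_add_mul (μ : ℝ) {s : ℝ} (hs : 0 < s) (x : ℝ) :
    gaussianReal μ (s ^ 2).toNNReal (Ioi (μ + s * x)) = ENNReal.ofReal (gaussTail x) := by
  rw [gaussianReal_eq_map_standard, Measure.map_apply (by fun_prop) measurableSet_Ioi,
    ← gaussianReal_zero_one_Ioi]
  congr 1
  ext z
  simp [hs]

lemma gaussianReal_Iio_sub_mul (μ : ℝ) {s : ℝ} (hs : 0 < s) (x : ℝ) :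
    gaussianReal μ (s ^ 2).toNNReal (Iio (μ - s * x)) = ENNReal.ofReal (gaussTail x) := by
  rw [← neg_sq, gaussianReal_eq_map_standard, Measure.map_apply (by fun_prop) measurableSet_Iio,
    ← gaussianReal_zero_one_Ioi]
  congr 1
  ext z
  simp only [mem_preimage, mem_Iio, mem_Ioi, sub_eq_add_neg, add_lt_add_iff_left, neg_mul,
    neg_lt_neg_iff, mul_lt_mul_iff_right₀ hs]

lemma map_dotProduct_pi_gaussianReal {L : ℕ} (m φ : Fin L → ℝ) :
    (Measure.pi fun i => gaussianReal (m i) 1).map (fun ω => φ ⬝ᵥ ω)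
      = gaussianReal (φ ⬝ᵥ m) (euclNorm φ ^ 2).toNNReal := by
  have hmeas : Measurable fun ω : Fin L → ℝ => φ ⬝ᵥ ω := by
    unfold dotProduct; fun_prop
  have : IsProbabilityMeasure ((Measure.pi fun i => gaussianReal (m i) 1).map
    (fun ω => φ ⬝ᵥ ω)) := Measure.isProbabilityMeasure_map hmeas.aemeasurable
  refine Measure.ext_of_charFun (funext fun t => ?_)
  have hsum : 0 ≤ ∑ i, φ i ^ 2 := Finset.sum_nonneg fun i _ => sq_nonneg _
  rw [charFun_apply_real, charFun_gaussianReal, integral_map hmeas.aemeasurable (by fun_prop)]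
  have hprod : ∀ ω : Fin L → ℝ, Complex.exp (t * (φ ⬝ᵥ ω : ℝ) * Complex.I)
      = ∏ i, Complex.exp ((t * φ i : ℝ) * (ω i) * Complex.I) := by
    intro ω
    rw [← Complex.exp_sum, dotProduct]
    push_cast
    rw [Finset.mul_sum, Finset.sum_mul]
    congr 1
    exact Finset.sum_congr rfl fun i _ => by ring
  simp_rw [hprod]
  rw [integral_fintype_prod_eq_prod
    (f := fun i (z : ℝ) => Complex.exp ((t * φ i : ℝ) * z * Complex.I))]
  simp_rw [← charFun_apply_real, charFun_gaussianReal]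
  rw [← Complex.exp_sum, euclNorm, Real.sq_sqrt hsum, Real.coe_toNNReal _ hsum, dotProduct]
  congr 1
  push_cast
  rw [Finset.sum_sub_distrib, Finset.mul_sum, Finset.sum_mul, Finset.sum_mul, Finset.sum_div]
  congr 1 <;> exact Finset.sum_congr rfl fun i _ => by ring

lemma stdGaussDensity_sub_eq_prod {L : ℕ} (m ω : Fin L → ℝ) :
    stdGaussDensity (ω - m) = ∏ i, gaussianPDFReal (m i) 1 (ω i) := by
  have hc : (√(2 * π))⁻¹ ^ L = (2 * π) ^ (-(L : ℝ) / 2) := by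
    rw [Real.sqrt_eq_rpow, ← Real.rpow_neg (by positivity), ← Real.rpow_natCast,
      ← Real.rpow_mul (by positivity)]
    congr 1
    ring
  simp only [gaussianPDFReal, stdGaussDensity, Finset.prod_mul_distrib, Finset.prod_const,
    Finset.card_univ, Fintype.card_fin, ← Real.exp_sum, NNReal.coe_one, mul_one, hc,
    Pi.sub_apply]
  rw [← Finset.sum_div, Finset.sum_neg_distrib]

lemma gaussObs_eq_pi {L n : ℕ} (A : Matrix (Fin L) (Fin n) ℝ) (x : Fin n → ℝ) :
    gaussObs A x = Measure.pi fun i => gaussianReal (A.mulVec x i) 1 := by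
  set m := A.mulVec x with hm
  refine (Measure.pi_eq fun s hs => ?_).symm
  have hint : ∀ i, Integrable ((s i).indicator (gaussianPDFReal (m i) 1)) := fun i =>
    (integrable_gaussianPDFReal (m i) 1).indicator (hs i)
  have hind : ∀ ω : Fin L → ℝ, (univ.pi s).indicator
      (fun ω => ENNReal.ofReal (stdGaussDensity (ω - m))) ω
      = ENNReal.ofReal (∏ i, (s i).indicator (gaussianPDFReal (m i) 1) (ω i)) := by
    intro ω
    by_cases hω : ω ∈ univ.pi s
    · rw [indicator_of_mem hω, stdGaussDensity_sub_eq_prod]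
      congr 1
      exact Finset.prod_congr rfl fun i _ => (indicator_of_mem (hω i (mem_univ i)) _).symm
    · rw [indicator_of_notMem hω]
      obtain ⟨i, hi⟩ : ∃ i, ω i ∉ s i := by simpa using hω
      rw [Finset.prod_eq_zero (Finset.mem_univ i) (indicator_of_notMem hi _), ENNReal.ofReal_zero]
  rw [gaussObs, withDensity_apply _ (MeasurableSet.univ_pi hs),
    ← lintegral_indicator (MeasurableSet.univ_pi hs)]
  simp_rw [← hm, hind]
  rw [← ofReal_integral_eq_lintegral_ofReal (volume_pi (α := fun _ : Fin L => ℝ) ▸ Integrable.fintype_prod hint)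
    (Eventually.of_forall fun ω => Finset.prod_nonneg fun i _ =>
      indicator_nonneg (fun z _ => gaussianPDFReal_nonneg _ _ _) _),
    integral_fintype_prod_volume_eq_prod
      (f := fun i => (s i).indicator (gaussianPDFReal (m i) 1)),
    ENNReal.ofReal_prod_of_nonneg fun i _ => integral_nonneg
      (indicator_nonneg fun z _ => gaussianPDFReal_nonneg _ _ _)]
  refine Finset.prod_congr rfl fun i _ => ?_
  rw [integral_indicator (hs i), gaussianReal_apply_eq_integral _ one_ne_zero]

instance {L n : ℕ} (A : Matrix (Fin L) (Fin n) ℝ) (x : Fin n → ℝ) :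
    IsProbabilityMeasure (gaussObs A x) := by
  rw [gaussObs_eq_pi]; infer_instance

lemma gaussObs_dotProduct_preimage {L n : ℕ} (A : Matrix (Fin L) (Fin n) ℝ) (x : Fin n → ℝ)
    (φ : Fin L → ℝ) {S : Set ℝ} (hS : MeasurableSet S) :
    gaussObs A x {ω | φ ⬝ᵥ ω ∈ S}
      = gaussianReal (φ ⬝ᵥ A.mulVec x) (euclNorm φ ^ 2).toNNReal S := by
  rw [gaussObs_eq_pi, ← map_dotProduct_pi_gaussianReal,
    Measure.map_apply (by unfold dotProduct; fun_prop) hS]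
  rfl

end GaussianMeasure

section EuclNorm

variable {L : ℕ}

lemma euclNorm_eq_norm (v : Fin L → ℝ) : euclNorm v = ‖WithLp.toLp 2 v‖ := by
  simp [euclNorm, EuclideanSpace.norm_eq]

lemma euclNorm_nonneg (v : Fin L → ℝ) : 0 ≤ euclNorm v := Real.sqrt_nonneg _

lemma euclNorm_sq (v : Fin L → ℝ) : euclNorm v ^ 2 = v ⬝ᵥ v := by
  rw [euclNorm, Real.sq_sqrt (Finset.sum_nonneg fun i _ => sq_nonneg _), dotProduct]
  exact Finset.sum_congr rfl fun i _ => sq _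

lemma euclNorm_smul (c : ℝ) (v : Fin L → ℝ) : euclNorm (c • v) = |c| * euclNorm v := by
  rw [euclNorm_eq_norm, euclNorm_eq_norm, WithLp.toLp_smul, norm_smul, Real.norm_eq_abs]

lemma eq_zero_of_euclNorm_eq_zero {v : Fin L → ℝ} (h : euclNorm v = 0) : v = 0 := by
  rw [euclNorm_eq_norm, norm_eq_zero] at h
  simpa using h

lemma euclNorm_zero : euclNorm (0 : Fin L → ℝ) = 0 := by simp [euclNorm]

lemma continuous_euclNorm : Continuous (euclNorm : (Fin L → ℝ) → ℝ) := by
  unfold euclNorm; fun_prop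

lemma norm_le_euclNorm (v : Fin L → ℝ) : ‖v‖ ≤ euclNorm v := by
  refine (pi_norm_le_iff_of_nonneg (euclNorm_nonneg v)).mpr fun i => ?_
  rw [euclNorm_eq_norm]
  exact PiLp.norm_apply_le (WithLp.toLp 2 v) i

lemma convexOn_euclNorm : ConvexOn ℝ univ (euclNorm : (Fin L → ℝ) → ℝ) := by
  refine ⟨convex_univ, fun u _ v _ a b ha hb _ => ?_⟩
  simp only [euclNorm_eq_norm, WithLp.toLp_add, WithLp.toLp_smul, smul_eq_mul]
  refine (norm_add_le _ _).trans_eq ?_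
  rw [norm_smul, norm_smul, Real.norm_of_nonneg ha, Real.norm_of_nonneg hb]

end EuclNorm

section SaddlePoint

variable {L n : ℕ} (A : Matrix (Fin L) (Fin n) ℝ) (g : Fin n → ℝ) (ε : ℝ)

lemma continuous_dotProduct_mulVec (φ : Fin L → ℝ) :
    Continuous fun x : Fin n → ℝ => φ ⬝ᵥ A.mulVec x :=
  Continuous.dotProduct continuous_const (Continuous.matrix_mulVec continuous_const continuous_id)

lemma continuous_PsiFun :
    Continuous fun z : (Fin L → ℝ) × (Fin n → ℝ) × (Fin n → ℝ) =>
      PsiFun A g ε z.2.1 z.2.2 z.1 := by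
  have h1 : Continuous fun z : (Fin L → ℝ) × (Fin n → ℝ) × (Fin n → ℝ) => g ⬝ᵥ z.2.1 :=
    Continuous.dotProduct continuous_const (by fun_prop)
  have h2 : Continuous fun z : (Fin L → ℝ) × (Fin n → ℝ) × (Fin n → ℝ) => g ⬝ᵥ z.2.2 :=
    Continuous.dotProduct continuous_const (by fun_prop)
  have h3 : Continuous fun z : (Fin L → ℝ) × (Fin n → ℝ) × (Fin n → ℝ) =>
      z.1 ⬝ᵥ A.mulVec (z.2.2 - z.2.1) :=
    Continuous.dotProduct (by fun_prop)
      (Continuous.matrix_mulVec continuous_const (by fun_prop))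
  have h4 := continuous_euclNorm.comp
    (continuous_fst (X := Fin L → ℝ) (Y := (Fin n → ℝ) × (Fin n → ℝ)))
  exact ((h1.sub h2).add h3).add (continuous_const.mul h4)

lemma PsiFun_convex_left {φ : Fin L → ℝ} {p p' : (Fin n → ℝ) × (Fin n → ℝ)} {a b : ℝ}
    (hab : a + b = 1) :
    PsiFun A g ε (a • p + b • p').1 (a • p + b • p').2 φ
      = a * PsiFun A g ε p.1 p.2 φ + b * PsiFun A g ε p'.1 p'.2 φ := by
  simp only [PsiFun, Prod.fst_add, Prod.snd_add, Prod.smul_fst, Prod.smul_snd, Matrix.mulVec_sub,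
    Matrix.mulVec_add, Matrix.mulVec_smul, dotProduct_add, dotProduct_smul, dotProduct_sub,
    smul_eq_mul]
  linear_combination (-2 * erfInv (ε / 2) * euclNorm φ) * hab

lemma PsiFun_convex_right (hq : 0 ≤ erfInv (ε / 2)) (x y : Fin n → ℝ) :
    ConvexOn ℝ univ fun φ : Fin L → ℝ => PsiFun A g ε x y φ := by
  refine ⟨convex_univ, fun u _ v _ a b ha hb hab => ?_⟩
  have h := mul_le_mul_of_nonneg_left
    (convexOn_euclNorm.2 (mem_univ u) (mem_univ v) ha hb hab)
    (mul_nonneg zero_le_two hq)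
  simp only [PsiFun, smul_eq_mul, add_dotProduct, smul_dotProduct] at h ⊢
  linear_combination h - (g ⬝ᵥ x - g ⬝ᵥ y) * hab

variable {X : Set (Fin n → ℝ)}

lemma setOf_PsiFun_eq_image (φ : Fin L → ℝ) :
    {v : ℝ | ∃ x ∈ X, ∃ y ∈ X, v = PsiFun A g ε x y φ}
      = (fun p : (Fin n → ℝ) × (Fin n → ℝ) => PsiFun A g ε p.1 p.2 φ) '' (X ×ˢ X) := by
  ext v
  simp only [mem_ofPred_eq, mem_image, mem_prod, Prod.exists]
  constructor
  · rintro ⟨x, hx, y, hy, rfl⟩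
    exact ⟨x, y, ⟨hx, hy⟩, rfl⟩
  · rintro ⟨x, y, ⟨hx, hy⟩, rfl⟩
    exact ⟨x, hx, y, hy, rfl⟩

lemma continuous_PsiFun_left (φ : Fin L → ℝ) :
    Continuous fun p : (Fin n → ℝ) × (Fin n → ℝ) => PsiFun A g ε p.1 p.2 φ :=
  (continuous_PsiFun A g ε).comp (Continuous.prodMk_right φ)

lemma PsiFun_le_PsiBar (hX : IsCompact X) {x y : Fin n → ℝ} (hx : x ∈ X) (hy : y ∈ X)
    (φ : Fin L → ℝ) : PsiFun A g ε x y φ ≤ PsiBar A g ε X φ := by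
  rw [PsiBar, setOf_PsiFun_eq_image]
  exact le_csSup ((hX.prod hX).image (continuous_PsiFun_left A g ε φ)).bddAbove
    ⟨(x, y), ⟨hx, hy⟩, rfl⟩

lemma exists_PsiBar_eq (hXne : X.Nonempty) (hX : IsCompact X) (φ : Fin L → ℝ) :
    ∃ x ∈ X, ∃ y ∈ X, PsiBar A g ε X φ = PsiFun A g ε x y φ := by
  have h := ((hX.prod hX).image (continuous_PsiFun_left A g ε φ)).sSup_mem
    ((hXne.prod hXne).image _)
  rw [← setOf_PsiFun_eq_image] at h
  exact h

lemma continuous_PsiBar (hX : IsCompact X) : Continuous (PsiBar A g ε X) := by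
  have h := (hX.prod hX).continuous_sSup
    (f := fun (φ : Fin L → ℝ) (p : (Fin n → ℝ) × (Fin n → ℝ)) => PsiFun A g ε p.1 p.2 φ)
    (continuous_PsiFun A g ε)
  refine h.congr fun φ => ?_
  rw [PsiBar, setOf_PsiFun_eq_image]

lemma exists_forall_PsiBar_le (hXne : X.Nonempty) (hX : IsCompact X)
    (hq : 0 < erfInv (ε / 2)) :
    ∃ φstar, ∀ φ, PsiBar A g ε X φstar ≤ PsiBar A g ε X φ := by
  refine (continuous_PsiBar A g ε hX).exists_forall_le ?_
  obtain ⟨x, hx⟩ := hXne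
  refine tendsto_atTop_mono (f := fun φ : Fin L → ℝ => 2 * erfInv (ε / 2) * ‖φ‖) (fun φ => ?_)
    ((tendsto_norm_cocompact_atTop).const_mul_atTop (by positivity))
  refine le_trans ?_ (PsiFun_le_PsiBar A g ε hX hx hx φ)
  have := mul_le_mul_of_nonneg_left (norm_le_euclNorm φ) (mul_nonneg zero_le_two hq.le)
  simpa [PsiFun] using this

/-- Minimax duality: some pair `(x, y)` bounds `Ψ(x, y; ·)` below by any lower bound of `Ψ̄`. -/
lemma exists_forall_le_PsiFun (hXne : X.Nonempty) (hX : IsCompact X) (hXcv : Convex ℝ X)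
    (hq : 0 ≤ erfInv (ε / 2)) {m : ℝ} (hm : ∀ φ, m ≤ PsiBar A g ε X φ) :
    ∃ x ∈ X, ∃ y ∈ X, ∀ φ, m ≤ PsiFun A g ε x y φ := by
  by_contra! hcon
  have hempty : (X ×ˢ X) ∩ ⋂ φ : Fin L → ℝ,
      {p : (Fin n → ℝ) × (Fin n → ℝ) | m ≤ PsiFun A g ε p.1 p.2 φ} = ∅ := by
    refine eq_empty_of_forall_notMem fun p ⟨hp, hp'⟩ => ?_
    obtain ⟨φ, hφ⟩ := hcon p.1 hp.1 p.2 hp.2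
    exact absurd (mem_iInter.mp hp' φ) (not_le.mpr hφ)
  obtain ⟨s, hs⟩ := (hX.prod hX).elim_finite_subfamily_closed _
    (fun φ => isClosed_le continuous_const (continuous_PsiFun_left A g ε φ)) hempty
  obtain ⟨φ, -, hφ⟩ := Sion.exists_lt_iInf_of_lt_iInf_of_finite
    (f := fun (p : (Fin n → ℝ) × (Fin n → ℝ)) (φ : Fin L → ℝ) => -PsiFun A g ε p.1 p.2 φ)
    (X := X ×ˢ X) (Y := univ) (hXne.prod hXne) (hX.prod hX)
    (fun φ _ => (continuous_PsiFun_left A g ε φ).neg.lowerSemicontinuous.lowerSemicontinuousOn _)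
    (fun φ _ => ConvexOn.quasiconvexOn ⟨hXcv.prod hXcv, fun p _ p' _ a b _ _ hab => by
      simp only [PsiFun_convex_left A g ε hab, smul_eq_mul]; linarith⟩)
    convex_univ
    (fun p _ => ((continuous_PsiFun A g ε).comp
      (Continuous.prodMk_left p)).neg.upperSemicontinuous.upperSemicontinuousOn _)
    (fun p _ => (PsiFun_convex_right A g ε hq p.1 p.2).neg.quasiconcaveOn)
    (hXcv.prod hXcv) s.finite_toSet (subset_univ _) (t := -m)
    (fun p hp => by
      by_contra! h
      have : p ∈ (X ×ˢ X) ∩ ⋂ φ ∈ s,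
          {p : (Fin n → ℝ) × (Fin n → ℝ) | m ≤ PsiFun A g ε p.1 p.2 φ} :=
        ⟨hp, mem_iInter₂.mpr fun φ hφ => by
          have := h φ hφ
          simp only [mem_ofPred_eq]; linarith⟩
      rw [hs] at this
      exact this)
  obtain ⟨x, hx, y, hy, hxy⟩ := exists_PsiBar_eq A g ε hXne hX φ
  have h1 := hφ (x, y) ⟨hx, hy⟩
  have h2 := hm φ
  simp only at h1
  linarith

lemma le_sub_of_forall_le_PsiFun {m : ℝ} {x y : Fin n → ℝ}
    (h : ∀ φ : Fin L → ℝ, m ≤ PsiFun A g ε x y φ) : m ≤ g ⬝ᵥ x - g ⬝ᵥ y := by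
  simpa [PsiFun, euclNorm_zero] using h 0

lemma euclNorm_le_of_forall_le_PsiFun (hq : 0 ≤ erfInv (ε / 2)) {m : ℝ} {x y : Fin n → ℝ}
    (h : ∀ φ : Fin L → ℝ, m ≤ PsiFun A g ε x y φ) :
    euclNorm (A.mulVec (x - y)) ≤ 2 * erfInv (ε / 2) := by
  by_contra! hlt
  have hm := le_sub_of_forall_le_PsiFun A g ε h
  set v := A.mulVec (x - y) with hv
  set q := erfInv (ε / 2)
  have hneg : A.mulVec (y - x) = -v := by rw [hv, ← Matrix.mulVec_neg, neg_sub]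
  have hpos : 0 < euclNorm v * (euclNorm v - 2 * q) :=
    mul_pos (by linarith) (by linarith)
  set t := (g ⬝ᵥ x - g ⬝ᵥ y - m + 1) / (euclNorm v * (euclNorm v - 2 * q)) with ht
  have ht0 : 0 ≤ t := div_nonneg (by linarith) hpos.le
  have htv : t * (euclNorm v * (euclNorm v - 2 * q)) = g ⬝ᵥ x - g ⬝ᵥ y - m + 1 :=
    div_mul_cancel₀ _ hpos.ne'
  have h1 := h (t • v)
  rw [PsiFun, hneg, dotProduct_neg, smul_dotProduct, ← euclNorm_sq, euclNorm_smul,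
    abs_of_nonneg ht0, smul_eq_mul] at h1
  nlinarith

end SaddlePoint

section Risk

open ProbabilityTheory

variable {L n : ℕ} (A : Matrix (Fin L) (Fin n) ℝ) (g : Fin n → ℝ) {X : Set (Fin n → ℝ)}

lemma nonneg_of_mem_riskSet (hXne : X.Nonempty) {ghat : (Fin L → ℝ) → ℝ} {ε δ : ℝ} (hε : ε ≤ 1)
    (hδ : (⨆ x ∈ X, gaussObs A x {ω | δ < |ghat ω - g ⬝ᵥ x|}) < ENNReal.ofReal ε) : 0 ≤ δ := by
  by_contra! hneg
  obtain ⟨x, hx⟩ := hXne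
  have huniv : {ω | δ < |ghat ω - g ⬝ᵥ x|} = univ :=
    eq_univ_of_forall fun ω => hneg.trans_le (abs_nonneg _)
  have h := (le_iSup₂ (f := fun x (_ : x ∈ X) =>
    gaussObs A x {ω | δ < |ghat ω - g ⬝ᵥ x|}) x hx).trans_lt hδ
  rw [huniv, measure_univ] at h
  exact absurd h (not_lt.mpr (ENNReal.ofReal_le_one.mpr hε))

lemma gaussObs_abs_sub_gt_le (x : Fin n → ℝ) {φ : Fin L → ℝ} (hφ : 0 < euclNorm φ) (s : ℝ) :
    gaussObs A x {ω | euclNorm φ * s < |φ ⬝ᵥ ω - φ ⬝ᵥ A.mulVec x|}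
      ≤ 2 * ENNReal.ofReal (gaussTail s) := by
  set μ := φ ⬝ᵥ A.mulVec x with hμ
  have hsub : {ω : Fin L → ℝ | euclNorm φ * s < |φ ⬝ᵥ ω - μ|}
      ⊆ {ω | φ ⬝ᵥ ω ∈ Ioi (μ + euclNorm φ * s)} ∪ {ω | φ ⬝ᵥ ω ∈ Iio (μ - euclNorm φ * s)} := by
    intro ω hω
    rcases lt_abs.mp (mem_ofPred_eq ▸ hω) with h | h
    · left; simp only [mem_ofPred_eq, mem_Ioi]; linarith
    · right; simp only [mem_ofPred_eq, mem_Iio]; linarith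
  refine (measure_mono hsub).trans ((measure_union_le _ _).trans_eq ?_)
  rw [gaussObs_dotProduct_preimage A x φ measurableSet_Ioi,
    gaussObs_dotProduct_preimage A x φ measurableSet_Iio, ← hμ,
    gaussianReal_Ioi_add_mul _ hφ, gaussianReal_Iio_sub_mul _ hφ, two_mul]

lemma exists_bias_bound (hXne : X.Nonempty) (hX : IsCompact X) (ε : ℝ) (φ : Fin L → ℝ) :
    ∃ B, B + erfInv (ε / 2) * euclNorm φ ≤ 1 / 2 * PsiBar A g ε X φ ∧
      ∀ x ∈ X, |φ ⬝ᵥ A.mulVec x + cStar A g X φ - g ⬝ᵥ x| ≤ B := by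
  have hcont : Continuous fun x : Fin n → ℝ => g ⬝ᵥ x :=
    Continuous.dotProduct continuous_const continuous_id
  have hA := continuous_dotProduct_mulVec A φ
  obtain ⟨x₀, hx₀, hmax₁⟩ := hX.exists_isMaxOn hXne (hcont.sub hA).continuousOn
  obtain ⟨y₀, hy₀, hmax₂⟩ := hX.exists_isMaxOn hXne (hcont.neg.add hA).continuousOn
  have hs₁ : sSup {v : ℝ | ∃ x ∈ X, v = g ⬝ᵥ x - φ ⬝ᵥ A.mulVec x}
      = g ⬝ᵥ x₀ - φ ⬝ᵥ A.mulVec x₀ :=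
    IsGreatest.csSup_eq ⟨⟨x₀, hx₀, rfl⟩, by rintro _ ⟨x, hx, rfl⟩; exact hmax₁ hx⟩
  have hs₂ : sSup {v : ℝ | ∃ y ∈ X, v = -(g ⬝ᵥ y) + φ ⬝ᵥ A.mulVec y}
      = -(g ⬝ᵥ y₀) + φ ⬝ᵥ A.mulVec y₀ :=
    IsGreatest.csSup_eq ⟨⟨y₀, hy₀, rfl⟩, by rintro _ ⟨y, hy, rfl⟩; exact hmax₂ hy⟩
  refine ⟨1 / 2 * (g ⬝ᵥ x₀ - φ ⬝ᵥ A.mulVec x₀ + (-(g ⬝ᵥ y₀) + φ ⬝ᵥ A.mulVec y₀)), ?_, ?_⟩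
  · have h := PsiFun_le_PsiBar A g ε hX hx₀ hy₀ φ
    rw [PsiFun, Matrix.mulVec_sub, dotProduct_sub] at h
    linarith
  · intro x hx
    have h₁ := hmax₁ hx
    have h₂ := hmax₂ hx
    simp only [mem_ofPred_eq, Pi.sub_apply, Pi.add_apply, Pi.neg_apply] at h₁ h₂
    rw [cStar, hs₁, hs₂, abs_le]
    constructor <;> linarith

lemma gaussRisk_affine_le (hXne : X.Nonempty) (hX : IsCompact X) {ε : ℝ} (hε : 0 < ε)
    (hε' : ε ≤ 1 / 2) (φ : Fin L → ℝ) :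
    gaussRisk A g X (fun ω => φ ⬝ᵥ ω + cStar A g X φ) ε ≤ 1 / 2 * PsiBar A g ε X φ := by
  refine le_of_forall_gt_imp_ge_of_dense fun δ hδ => ?_
  refine csInf_le ⟨0, fun δ' hδ' => nonneg_of_mem_riskSet A g hXne (by linarith) hδ'⟩ ?_
  obtain ⟨B, hB, hbias⟩ := exists_bias_bound A g hXne hX ε φ
  have hincl : ∀ x ∈ X, {ω : Fin L → ℝ | δ < |φ ⬝ᵥ ω + cStar A g X φ - g ⬝ᵥ x|}
      ⊆ {ω | δ - B < |φ ⬝ᵥ ω - φ ⬝ᵥ A.mulVec x|} := by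
    intro x hx ω hω
    have h := abs_add_le (φ ⬝ᵥ ω - φ ⬝ᵥ A.mulVec x)
      (φ ⬝ᵥ A.mulVec x + cStar A g X φ - g ⬝ᵥ x)
    rw [show φ ⬝ᵥ ω - φ ⬝ᵥ A.mulVec x + (φ ⬝ᵥ A.mulVec x + cStar A g X φ - g ⬝ᵥ x)
      = φ ⬝ᵥ ω + cStar A g X φ - g ⬝ᵥ x by ring] at h
    have := hbias x hx
    simp only [mem_ofPred_eq] at hω ⊢
    linarith
  rcases (euclNorm_nonneg φ).eq_or_lt with h0 | hpos
  · obtain rfl := eq_zero_of_euclNorm_eq_zero h0.symm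
    rw [euclNorm_zero, mul_zero, add_zero] at hB
    have hzero : ∀ x ∈ X, gaussObs A x
        {ω : Fin L → ℝ | δ < |0 ⬝ᵥ ω + cStar A g X 0 - g ⬝ᵥ x|} = 0 := by
      intro x hx
      refine measure_mono_null (hincl x hx) ?_
      have : ¬ δ - B < 0 := by linarith
      simp [this]
    have : (⨆ x ∈ X, gaussObs A x
        {ω : Fin L → ℝ | δ < |0 ⬝ᵥ ω + cStar A g X 0 - g ⬝ᵥ x|}) ≤ 0 :=
      iSup₂_le fun x hx => (hzero x hx).le
    exact this.trans_lt (ENNReal.ofReal_pos.mpr hε)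
  · set s := (δ - B) / euclNorm φ with hs
    have hqs : erfInv (ε / 2) < s := by rw [hs, lt_div_iff₀ hpos]; linarith
    have htail : gaussTail s < ε / 2 := by
      rw [← gaussTail_erfInv (y := ε / 2) (by linarith) (by linarith)]
      exact strictAnti_gaussTail hqs
    have hδB : δ - B = euclNorm φ * s := by rw [hs]; field_simp
    refine (iSup₂_le fun x hx => (measure_mono (hincl x hx)).trans
      (hδB ▸ gaussObs_abs_sub_gt_le A x hpos s)).trans_lt ?_
    rw [← ENNReal.ofReal_ofNat, ← ENNReal.ofReal_mul zero_le_two]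
    exact (ENNReal.ofReal_lt_ofReal_iff hε).mpr (by linarith)

lemma stdGaussDensity_sub_le_iff (m m' ω : Fin L → ℝ) :
    stdGaussDensity (ω - m) ≤ stdGaussDensity (ω - m')
      ↔ (m - m') ⬝ᵥ ω ≤ (m ⬝ᵥ m - m' ⬝ᵥ m') / 2 := by
  have hexp : ∀ w : Fin L → ℝ, ∑ i, (ω - w) i ^ 2 = ω ⬝ᵥ ω - 2 * w ⬝ᵥ ω + w ⬝ᵥ w := by
    intro w
    simp only [dotProduct, Finset.mul_sum, ← Finset.sum_sub_distrib, ← Finset.sum_add_distrib]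
    exact Finset.sum_congr rfl fun i _ => by simp only [Pi.sub_apply]; ring
  rw [stdGaussDensity, stdGaussDensity, mul_le_mul_iff_right₀ (by positivity), Real.exp_le_exp,
    hexp, hexp, sub_dotProduct]
  constructor <;> intro h <;> linarith

/-- Two-point testing bound: the total error of any test between `N(Ax, I)` and `N(Ay, I)` is at
least that of the likelihood ratio test. -/
lemma two_mul_gaussTail_le_add (x y : Fin n → ℝ) {s : ℝ} (hs : 0 ≤ s)
    (hxy : euclNorm (A.mulVec (x - y)) ≤ 2 * s) {S : Set (Fin L → ℝ)} (hS : MeasurableSet S) :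
    2 * ENNReal.ofReal (gaussTail s) ≤ gaussObs A x S + gaussObs A y Sᶜ := by
  set p : (Fin L → ℝ) → ℝ≥0∞ := fun ω => ENNReal.ofReal (stdGaussDensity (ω - A.mulVec x))
  set p' : (Fin L → ℝ) → ℝ≥0∞ := fun ω => ENNReal.ofReal (stdGaussDensity (ω - A.mulVec y))
  set H : Set (Fin L → ℝ) := {ω | A.mulVec (x - y) ⬝ᵥ ω ∈ Iic
    ((A.mulVec x ⬝ᵥ A.mulVec x - A.mulVec y ⬝ᵥ A.mulVec y) / 2)} with hHdef
  have hdot : Measurable fun ω : Fin L → ℝ => A.mulVec (x - y) ⬝ᵥ ω := by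
    unfold dotProduct; fun_prop
  have hH : MeasurableSet H := hdot measurableSet_Iic
  have hmin : gaussObs A x H + gaussObs A y Hᶜ ≤ gaussObs A x S + gaussObs A y Sᶜ := by
    rw [gaussObs, gaussObs, withDensity_apply _ hH, withDensity_apply _ hH.compl,
      withDensity_apply _ hS, withDensity_apply _ hS.compl]
    calc (∫⁻ ω in H, p ω) + ∫⁻ ω in Hᶜ, p' ω
        = (∫⁻ ω in H, min (p ω) (p' ω)) + ∫⁻ ω in Hᶜ, min (p ω) (p' ω) := by
          congr 1
          · refine setLIntegral_congr_fun hH fun ω hω => (min_eq_left ?_).symm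
            refine ENNReal.ofReal_le_ofReal ((stdGaussDensity_sub_le_iff _ _ _).mpr ?_)
            rw [← Matrix.mulVec_sub]
            exact hω
          · refine setLIntegral_congr_fun hH.compl fun ω hω => (min_eq_right ?_).symm
            refine ENNReal.ofReal_le_ofReal ?_
            by_contra! hlt
            refine hω ?_
            have := (stdGaussDensity_sub_le_iff _ _ _).mp hlt.le
            rw [← Matrix.mulVec_sub] at this
            exact this
      _ = (∫⁻ ω in S, min (p ω) (p' ω)) + ∫⁻ ω in Sᶜ, min (p ω) (p' ω) := by
          rw [lintegral_add_compl _ hH, lintegral_add_compl _ hS]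
      _ ≤ (∫⁻ ω in S, p ω) + ∫⁻ ω in Sᶜ, p' ω :=
          add_le_add (lintegral_mono fun ω => min_le_left _ _)
            (lintegral_mono fun ω => min_le_right _ _)
  refine le_trans ?_ hmin
  set v := A.mulVec (x - y) with hv
  set b := (A.mulVec x ⬝ᵥ A.mulVec x - A.mulVec y ⬝ᵥ A.mulVec y) / 2 with hb
  rcases (euclNorm_nonneg v).eq_or_lt with h0 | hpos
  · have hv0 := eq_zero_of_euclNorm_eq_zero h0.symm
    have hAxy : A.mulVec x = A.mulVec y := by
      rw [hv, Matrix.mulVec_sub] at hv0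
      exact sub_eq_zero.mp hv0
    have : gaussObs A x = gaussObs A y := by rw [gaussObs, gaussObs, hAxy]
    rw [this, measure_add_measure_compl hH, measure_univ, ← ENNReal.ofReal_ofNat,
      ← ENNReal.ofReal_mul zero_le_two, ENNReal.ofReal_le_one]
    have := strictAnti_gaussTail.antitone hs
    rw [gaussTail_zero] at this
    linarith
  · have hsq := euclNorm_sq v
    have hvv : v ⬝ᵥ v = v ⬝ᵥ A.mulVec x - v ⬝ᵥ A.mulVec y := by
      rw [← dotProduct_sub, ← Matrix.mulVec_sub]
    have hbb : b = (v ⬝ᵥ A.mulVec x + v ⬝ᵥ A.mulVec y) / 2 := by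
      rw [hb, hv, Matrix.mulVec_sub, sub_dotProduct, sub_dotProduct,
        dotProduct_comm (A.mulVec y) (A.mulVec x)]
      ring
    have hb₁ : b = v ⬝ᵥ A.mulVec x - euclNorm v * (euclNorm v / 2) := by
      rw [hbb]; linarith
    have hb₂ : b = v ⬝ᵥ A.mulVec y + euclNorm v * (euclNorm v / 2) := by
      rw [hbb]; linarith
    have hle : ENNReal.ofReal (gaussTail s) ≤ ENNReal.ofReal (gaussTail (euclNorm v / 2)) :=
      ENNReal.ofReal_le_ofReal (strictAnti_gaussTail.antitone (by linarith))
    have hHc : Hᶜ = {ω | v ⬝ᵥ ω ∈ Ioi b} := by ext ω; simp [hHdef]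
    rw [two_mul]
    refine add_le_add (hle.trans ?_) (hle.trans ?_)
    · rw [hHdef, gaussObs_dotProduct_preimage A x v measurableSet_Iic,
        ← gaussianReal_Iio_sub_mul (v ⬝ᵥ A.mulVec x) hpos, ← hb₁]
      exact measure_mono Iio_subset_Iic_self
    · rw [hHc, gaussObs_dotProduct_preimage A y v measurableSet_Ioi,
        ← gaussianReal_Ioi_add_mul (v ⬝ᵥ A.mulVec y) hpos, ← hb₂]

/-- On a compact signal set the observation distributions are dominated by one finite measure. -/
lemma exists_finiteMeasure_gaussObs_le (hX : IsCompact X) :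
    ∃ ν : Measure (Fin L → ℝ), IsFiniteMeasure ν ∧ ∀ x ∈ X, gaussObs A x ≤ ν := by
  obtain ⟨C, hC⟩ := (hX.image (f := fun x => ∑ i, (A.mulVec x i) ^ 2) (by
    have h : Continuous fun x : Fin n → ℝ => A.mulVec x :=
      Continuous.matrix_mulVec continuous_const continuous_id
    fun_prop)).bddAbove
  set f : (Fin L → ℝ) → ℝ := fun ω =>
    ((2 * π) ^ (-(L : ℝ) / 2) * Real.exp (C / 2)) * ∏ i, Real.exp (-(1 / 4) * ω i ^ 2) with hf
  have hint : Integrable f := by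
    refine Integrable.const_mul ?_ _
    rw [volume_pi]
    exact Integrable.fintype_prod (f := fun (_ : Fin L) (t : ℝ) => Real.exp (-(1 / 4) * t ^ 2))
      fun i => integrable_exp_neg_mul_sq (by norm_num)
  refine ⟨volume.withDensity fun ω => ENNReal.ofReal (f ω),
    isFiniteMeasure_withDensity_ofReal hint.2, fun x hx => ?_⟩
  refine withDensity_mono (Eventually.of_forall fun ω => ENNReal.ofReal_le_ofReal ?_)
  have hCx : ∑ i, (A.mulVec x i) ^ 2 ≤ C := hC ⟨x, hx, rfl⟩
  rw [hf, stdGaussDensity]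
  simp only
  rw [← Real.exp_sum, mul_assoc, ← Real.exp_add]
  gcongr
  have hsum : ∑ i, (-(1 / 2) * (ω i - A.mulVec x i) ^ 2)
      ≤ ∑ i, ((1 / 2) * (A.mulVec x i) ^ 2 + -(1 / 4) * ω i ^ 2) :=
    Finset.sum_le_sum fun i _ => by nlinarith [sq_nonneg (ω i - 2 * A.mulVec x i)]
  rw [Finset.sum_add_distrib, ← Finset.mul_sum, ← Finset.mul_sum] at hsum
  simp only [Pi.sub_apply]
  linarith

lemma riskSet_nonempty (hX : IsCompact X) {ghat : (Fin L → ℝ) → ℝ} (hghat : Measurable ghat)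
    {ε : ℝ} (hε : 0 < ε) :
    {δ : ℝ | (⨆ x ∈ X, gaussObs A x {ω | δ < |ghat ω - g ⬝ᵥ x|})
      < ENNReal.ofReal ε}.Nonempty := by
  obtain ⟨ν, hν, hle⟩ := exists_finiteMeasure_gaussObs_le A hX
  obtain ⟨C, hC⟩ := (hX.image (f := fun x => |g ⬝ᵥ x|)
    (Continuous.dotProduct continuous_const continuous_id).abs).bddAbove
  have htend : Tendsto (fun k : ℕ => ν {ω | (k : ℝ) < |ghat ω|}) atTop (𝓝 0) := by
    have hempty : ⋂ k : ℕ, {ω | (k : ℝ) < |ghat ω|} = ∅ := by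
      refine eq_empty_of_forall_notMem fun ω hω => ?_
      obtain ⟨k, hk⟩ := exists_nat_ge |ghat ω|
      exact absurd (mem_iInter.mp hω k) (not_lt.mpr hk)
    rw [← measure_empty (μ := ν), ← hempty]
    refine tendsto_measure_iInter_atTop
      (fun k => (measurableSet_lt measurable_const hghat.abs).nullMeasurableSet)
      (fun k l hkl ω hω => ?_) ⟨0, measure_ne_top _ _⟩
    have : (k : ℝ) ≤ l := Nat.cast_le.mpr hkl
    exact this.trans_lt hω
  obtain ⟨k, hk⟩ := (htend.eventually_lt_const (ENNReal.ofReal_pos.mpr hε)).exists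
  refine ⟨k + C, (iSup₂_le fun x hx => ?_).trans_lt hk⟩
  refine (measure_mono fun ω hω => ?_).trans (hle x hx _)
  have h₁ : |g ⬝ᵥ x| ≤ C := hC ⟨x, hx, rfl⟩
  have h₂ := abs_sub (ghat ω) (g ⬝ᵥ x)
  simp only [mem_ofPred_eq] at hω ⊢
  linarith

lemma half_sub_le_gaussRisk (hX : IsCompact X) {ε : ℝ} (hε : 0 < ε) (hε' : ε < 1 / 2)
    {ghat : (Fin L → ℝ) → ℝ} (hghat : Measurable ghat) {x y : Fin n → ℝ} (hx : x ∈ X)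
    (hy : y ∈ X) (hxy : euclNorm (A.mulVec (x - y)) ≤ 2 * erfInv ε) :
    (g ⬝ᵥ x - g ⬝ᵥ y) / 2 ≤ gaussRisk A g X ghat ε := by
  refine le_csInf (riskSet_nonempty A g hX hghat hε) fun δ hδ => ?_
  by_contra! hlt
  have hprob : ∀ z ∈ X, gaussObs A z {ω | δ < |ghat ω - g ⬝ᵥ z|} < ENNReal.ofReal ε :=
    fun z hz => (le_iSup₂ (f := fun x (_ : x ∈ X) =>
      gaussObs A x {ω | δ < |ghat ω - g ⬝ᵥ x|}) z hz).trans_lt hδ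
  have hS : MeasurableSet {ω | δ < |ghat ω - g ⬝ᵥ x|} :=
    measurableSet_lt measurable_const (hghat.sub_const _).abs
  have hsub : {ω | δ < |ghat ω - g ⬝ᵥ x|}ᶜ ⊆ {ω | δ < |ghat ω - g ⬝ᵥ y|} := by
    intro ω hω
    simp only [mem_compl_iff, mem_ofPred_eq, not_lt] at hω ⊢
    have h₁ := (abs_le.mp hω).1
    have h₂ := le_abs_self (ghat ω - g ⬝ᵥ y)
    linarith
  have h := two_mul_gaussTail_le_add A x y (erfInv_pos hε hε').le hxy hS
  rw [gaussTail_erfInv hε hε', two_mul] at h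
  exact absurd (h.trans (add_le_add_right (measure_mono hsub) _))
    (not_le.mpr (ENNReal.add_lt_add (hprob x hx) (hprob y hy)))

lemma half_sub_le_gaussRiskStar (hX : IsCompact X) {ε : ℝ} (hε : 0 < ε)
    (hε' : ε < 1 / 2) {x y : Fin n → ℝ} (hx : x ∈ X) (hy : y ∈ X)
    (hxy : euclNorm (A.mulVec (x - y)) ≤ 2 * erfInv ε) :
    (g ⬝ᵥ x - g ⬝ᵥ y) / 2 ≤ gaussRiskStar A g X ε := by
  refine le_csInf ⟨_, 0, measurable_zero, rfl⟩ ?_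
  rintro _ ⟨ghat, hghat, rfl⟩
  exact half_sub_le_gaussRisk A g hX hε hε' hghat hx hy hxy

lemma erfInv_div_mul_half_sub_le_gaussRiskStar (hX : IsCompact X) (hXcv : Convex ℝ X) {ε q : ℝ}
    (hε : 0 < ε) (hε' : ε < 1 / 2) (hq : erfInv ε ≤ q) {x y : Fin n → ℝ} (hx : x ∈ X)
    (hy : y ∈ X) (hxy : euclNorm (A.mulVec (x - y)) ≤ 2 * q) :
    erfInv ε / q * ((g ⬝ᵥ x - g ⬝ᵥ y) / 2) ≤ gaussRiskStar A g X ε := by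
  have hpos := erfInv_pos hε hε'
  have hq0 : 0 < q := hpos.trans_le hq
  set c := erfInv ε / q with hc
  have hc0 : 0 < c := by positivity
  have hc1 : c ≤ 1 := (div_le_one hq0).mpr hq
  have hx' := hXcv hx hy (a := (1 + c) / 2) (b := (1 - c) / 2) (by linarith) (by linarith) (by ring)
  have hy' := hXcv hx hy (a := (1 - c) / 2) (b := (1 + c) / 2) (by linarith) (by linarith) (by ring)
  have hdiff : ((1 + c) / 2) • x + ((1 - c) / 2) • y - (((1 - c) / 2) • x + ((1 + c) / 2) • y)
      = c • (x - y) := by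
    ext i
    simp only [Pi.sub_apply, Pi.add_apply, Pi.smul_apply, smul_eq_mul]
    ring
  have h := half_sub_le_gaussRiskStar A g hX hε hε' hx' hy' (by
    rw [hdiff, Matrix.mulVec_smul, euclNorm_smul, abs_of_pos hc0]
    calc c * euclNorm (A.mulVec (x - y)) ≤ c * (2 * q) := by gcongr
      _ = 2 * erfInv ε := by rw [hc]; field_simp)
  rw [← dotProduct_sub, hdiff, dotProduct_smul, dotProduct_sub, smul_eq_mul] at h
  linarith

end Risk

/-- **Proposition 4.2.** In the Gaussian observation model, for every
`ε ∈ (0, 1/2)` the infimum of `Ψ̄` is attained at some `φ_*`, and the affine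
estimate `ĝ_ε(ω) = φ_*ᵀω + c_*` satisfies
`Risk(ĝ_ε; ε) ≤ Ψ_*(ε) ≤ [ErfInv(ε/2)/ErfInv(ε)]·Risk_*(ε)`; moreover
`ErfInv(ε/2)/ErfInv(ε) < √(2 ln(2/ε))/ErfInv(ε)`. -/
theorem gauss_affine_estimate_erfInv_ratio {L n : ℕ}
    (A : Matrix (Fin L) (Fin n) ℝ) (g : Fin n → ℝ) (X : Set (Fin n → ℝ))
    (hXne : X.Nonempty) (hXcp : IsCompact X) (hXcv : Convex ℝ X)
    (ε : ℝ) (hε : ε ∈ Set.Ioo (0 : ℝ) (1/2)) :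
    (∃ φstar : Fin L → ℝ,
      IsLeast {v : ℝ | ∃ φ : Fin L → ℝ, v = PsiBar A g ε X φ} (PsiBar A g ε X φstar)
      ∧ gaussRisk A g X (fun ω => φstar ⬝ᵥ ω + cStar A g X φstar) ε ≤ PsiStar A g ε X)
    ∧ PsiStar A g ε X ≤ (erfInv (ε / 2) / erfInv ε) * gaussRiskStar A g X ε
    ∧ erfInv (ε / 2) / erfInv ε < Real.sqrt (2 * Real.log (2 / ε)) / erfInv ε := by
  obtain ⟨hε0, hε1⟩ := hε
  have hq : 0 < erfInv (ε / 2) := erfInv_pos (by linarith) (by linarith)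
  have hp : 0 < erfInv ε := erfInv_pos hε0 hε1
  have hpq : erfInv ε ≤ erfInv (ε / 2) := by
    rw [← strictAnti_gaussTail.le_iff_ge, gaussTail_erfInv hε0 hε1,
      gaussTail_erfInv (by linarith) (by linarith)]
    linarith
  obtain ⟨φstar, hmin⟩ := exists_forall_PsiBar_le A g ε hXne hXcp hq
  have hleast : IsLeast {v : ℝ | ∃ φ : Fin L → ℝ, v = PsiBar A g ε X φ}
      (PsiBar A g ε X φstar) :=
    ⟨⟨φstar, rfl⟩, by rintro _ ⟨φ, rfl⟩; exact hmin φ⟩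
  have hstar : PsiStar A g ε X = 1 / 2 * PsiBar A g ε X φstar := by
    rw [PsiStar, hleast.csInf_eq]
  refine ⟨⟨φstar, hleast, ?_⟩, ?_, ?_⟩
  · rw [hstar]
    exact gaussRisk_affine_le A g hXne hXcp hε0 hε1.le φstar
  · obtain ⟨x, hx, y, hy, hxy⟩ := exists_forall_le_PsiFun A g ε hXne hXcp hXcv hq.le hmin
    have hbound := le_sub_of_forall_le_PsiFun A g ε hxy
    have hnorm := euclNorm_le_of_forall_le_PsiFun A g ε hq.le hxy
    have hrisk := erfInv_div_mul_half_sub_le_gaussRiskStar A g hXcp hXcv hε0 hε1 hpq hx hy hnorm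
    calc PsiStar A g ε X ≤ (g ⬝ᵥ x - g ⬝ᵥ y) / 2 := by rw [hstar]; linarith
      _ = erfInv (ε / 2) / erfInv ε
          * (erfInv ε / erfInv (ε / 2) * ((g ⬝ᵥ x - g ⬝ᵥ y) / 2)) := by field_simp
      _ ≤ erfInv (ε / 2) / erfInv ε * gaussRiskStar A g X ε :=
          mul_le_mul_of_nonneg_left hrisk (by positivity)
  · have h := erfInv_lt_sqrt (y := ε / 2) (by linarith) (by linarith)
    rw [one_div_div] at h
    exact div_lt_div_of_pos_right h hp
end

section
/- (Proposition 5.1, bound (5.2)) Let (D, F) be a good pair, let X¹ ⊆ X² ⊆ ⋯ ⊆ X^K be a nested collection of nonempty convex compact sets in ℝⁿ with A(X^K) ⊆ M, A affine, g ∈ ℝⁿ, ε ∈ (0, 1/4) and δ > 0. For each k let Φ_*^k denote the saddle-point function associated with X^k, and let ĝ^k be estimates satisfying sup_{x∈X^k} Prob_{ω∼p_{A(x)}·P}{|ĝ^k(ω) − gᵀx| > Φ_*^k(ln(2K/ε)) + δ} < ε/K for k = 1,…,K. Define the adaptive estimate ĝ(ω) = ĝ^{k(ω)}(ω), where k(ω)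 is the smallest index k that is ω-good, i.e., such that |ĝ^{k′}(ω) − ĝ^k(ω)| ≤ Φ_*^k(ln(2K/ε)) + Φ_*^{k′}(ln(2K/ε)) + 2δ for all k′ with k ≤ k′ ≤ K. Then with ϑ = 3·ln(2K/ε)/ln(2/ε), for every k with 1 ≤ k ≤ K: sup_{x∈X^k} Prob_{ω∼p_{A(x)}·P}{|ĝ(ω) − gᵀx| > ϑ·Φ_*^k(ln(2/ε)) + 3δ} < ε. -/
open MeasureTheory Real Matrix Set
open scoped ENNReal

/-- A "good pair" `(𝒟, ℱ)` in the sense of Juditsky–Nemirovski: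
a parametric family of positive probability densities `p μ`, `μ ∈ M`, on `(Ω, P)`,
together with a finite-dimensional linear space `F` of Borel functions on `Ω`
containing the constants, such that log-likelihood ratios belong to `F` and
`μ ↦ ln ∫ e^{φ} p_μ dP` is well defined (finite, witnessed by integrability)
and concave on `M` for every `φ ∈ F`. -/
structure GoodPair (Ω : Type*) [MeasurableSpace Ω] (P : Measure Ω)
    (E : Type*) [NormedAddCommGroup E] [NormedSpace ℝ E] where
  M : Set E
  p : E → Ω → ℝ
  F : Submodule ℝ (Ω → ℝ)
  M_open : IsOpen M
  M_convex : Convex ℝ M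
  p_meas : ∀ μ ∈ M, Measurable (p μ)
  p_pos : ∀ μ ∈ M, ∀ ω, 0 < p μ ω
  p_prob : ∀ μ ∈ M, ∫ ω, p μ ω ∂P = 1
  F_fd : FiniteDimensional ℝ F
  F_meas : ∀ φ ∈ F, Measurable φ
  F_const : ∀ c : ℝ, (fun _ : Ω => c) ∈ F
  logratio_mem : ∀ μ ∈ M, ∀ ν ∈ M, (fun ω => Real.log (p μ ω / p ν ω)) ∈ F
  F_finite : ∀ φ ∈ F, ∀ μ ∈ M, Integrable (fun ω => Real.exp (φ ω) * p μ ω) P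
  F_concave : ∀ φ ∈ F,
    ConcaveOn ℝ M (fun μ => Real.log (∫ ω, Real.exp (φ ω) * p μ ω ∂P))

variable {Ω : Type*} [MeasurableSpace Ω] {P : Measure Ω}
  {E : Type*} [NormedAddCommGroup E] [NormedSpace ℝ E] {n : ℕ}

/-- The distribution of the observation when the parameter is `μ`:
the measure with density `p μ` with respect to `P`. -/
noncomputable def obsMeasure (D : GoodPair Ω P E) (μ : E) : Measure Ω :=
  P.withDensity fun ω => ENNReal.ofReal (D.p μ ω)

/-- The `ε`-risk of an estimate `ghat` of the linear form `gᵀx`, `x ∈ X`: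
`inf {δ | sup_{x ∈ X} Prob_{ω ∼ p_{A(x)}·P} {|ghat ω - gᵀx| > δ} < ε}`. -/
noncomputable def Risk (D : GoodPair Ω P E) (A : (Fin n → ℝ) →ᵃ[ℝ] E)
    (g : Fin n → ℝ) (X : Set (Fin n → ℝ)) (ghat : Ω → ℝ) (ε : ℝ) : ℝ :=
  sInf {δ : ℝ |
    (⨆ x ∈ X, obsMeasure D (A x) {ω | δ < |ghat ω - g ⬝ᵥ x|}) < ENNReal.ofReal ε}

/-- The minimax optimal `ε`-risk over all (Borel) estimates. -/
noncomputable def RiskStar (D : GoodPair Ω P E) (A : (Fin n → ℝ) →ᵃ[ℝ] E)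
    (g : Fin n → ℝ) (X : Set (Fin n → ℝ)) (ε : ℝ) : ℝ :=
  sInf {ρ : ℝ | ∃ ghat : Ω → ℝ, Measurable ghat ∧ ρ = Risk D A g X ghat ε}

/-- The minimax optimal `ε`-risk over affine estimates, i.e. estimates `φ ∈ F`. -/
noncomputable def RiskAff (D : GoodPair Ω P E) (A : (Fin n → ℝ) →ᵃ[ℝ] E)
    (g : Fin n → ℝ) (X : Set (Fin n → ℝ)) (ε : ℝ) : ℝ :=
  sInf {ρ : ℝ | ∃ φ ∈ D.F, ρ = Risk D A g X φ ε}

/-- The function `Φ_r(x, y; φ, α)`. -/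
noncomputable def PhiFun (D : GoodPair Ω P E) (A : (Fin n → ℝ) →ᵃ[ℝ] E)
    (g : Fin n → ℝ) (r : ℝ) (x y : Fin n → ℝ) (φ : Ω → ℝ) (α : ℝ) : ℝ :=
  g ⬝ᵥ x - g ⬝ᵥ y
    + α * Real.log (∫ ω, Real.exp (φ ω / α) * D.p (A y) ω ∂P)
    + α * Real.log (∫ ω, Real.exp (-φ ω / α) * D.p (A x) ω ∂P)
    + 2 * α * r

/-- `Φ_*(r)` defined through the sup-inf value:
`2Φ_*(r) = sup_{x,y ∈ X} inf_{φ ∈ F, α > 0} Φ_r(x, y; φ, α)`. -/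
noncomputable def PhiStarSI (D : GoodPair Ω P E) (A : (Fin n → ℝ) →ᵃ[ℝ] E)
    (g : Fin n → ℝ) (X : Set (Fin n → ℝ)) (r : ℝ) : ℝ :=
  (1/2) * sSup {v : ℝ | ∃ x ∈ X, ∃ y ∈ X,
    v = sInf {w : ℝ | ∃ φ ∈ D.F, ∃ α : ℝ, 0 < α ∧ w = PhiFun D A g r x y φ α}}

/-- `Φ_*(r)` defined through the inf-sup value:
`2Φ_*(r) = inf_{φ ∈ F, α > 0} sup_{x,y ∈ X} Φ_r(x, y; φ, α)`. -/
noncomputable def PhiStarIS (D : GoodPair Ω P E) (A : (Fin n → ℝ) →ᵃ[ℝ] E)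
    (g : Fin n → ℝ) (X : Set (Fin n → ℝ)) (r : ℝ) : ℝ :=
  (1/2) * sInf {v : ℝ | ∃ φ ∈ D.F, ∃ α : ℝ, 0 < α ∧
    v = sSup {w : ℝ | ∃ x ∈ X, ∃ y ∈ X, w = PhiFun D A g r x y φ α}}

/-- `k` is an `ω`-good index for the family of estimates `ghatk` with
thresholds `thresh`: `|ĝ^{k'}(ω) − ĝ^k(ω)| ≤ thresh k + thresh k' + 2δ`
for all `k ≤ k' < K`. -/
def isGoodIdx {Ω' : Type*} (K : ℕ) (ghatk : ℕ → Ω' → ℝ) (thresh : ℕ → ℝ)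
    (δ : ℝ) (ω : Ω') (k : ℕ) : Prop :=
  k < K ∧ ∀ k', k ≤ k' → k' < K →
    |ghatk k' ω - ghatk k ω| ≤ thresh k + thresh k' + 2 * δ

/-- The smallest `ω`-good index. -/
noncomputable def kSel {Ω' : Type*} (K : ℕ) (ghatk : ℕ → Ω' → ℝ) (thresh : ℕ → ℝ)
    (δ : ℝ) (ω : Ω') : ℕ :=
  sInf {k | isGoodIdx K ghatk thresh δ ω k}

/-- The Lepskii-type adaptive estimate `ĝ(ω) = ĝ^{k(ω)}(ω)`. -/
noncomputable def adaptEst {Ω' : Type*} (K : ℕ) (ghatk : ℕ → Ω' → ℝ)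
    (thresh : ℕ → ℝ) (δ : ℝ) (ω : Ω') : ℝ :=
  ghatk (kSel K ghatk thresh δ ω) ω

namespace GoodPair

/-- Cauchy–Schwarz for the exponential moments: `∫ e^ψ p_μ · ∫ e^{-ψ} p_μ ≥ 1`. -/
lemma log_integral_exp_add_nonneg (D : GoodPair Ω P E) {μ : E} (hμ : μ ∈ D.M) {ψ : Ω → ℝ}
    (hψ : ψ ∈ D.F) :
    0 ≤ Real.log (∫ ω, Real.exp (ψ ω) * D.p μ ω ∂P)
      + Real.log (∫ ω, Real.exp (-ψ ω) * D.p μ ω ∂P) := by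
  have hp : Integrable (D.p μ) P := by
    by_contra h
    have := D.p_prob μ hμ
    rw [integral_undef h] at this
    exact zero_ne_one this
  have ha := D.F_finite ψ hψ μ hμ
  have hb : Integrable (fun ω => Real.exp (-ψ ω) * D.p μ ω) P :=
    D.F_finite (-ψ) (D.F.neg_mem hψ) μ hμ
  have ha0 : 0 ≤ ∫ ω, Real.exp (ψ ω) * D.p μ ω ∂P :=
    integral_nonneg fun ω => (mul_pos (Real.exp_pos _) (D.p_pos μ hμ ω)).le
  have hb0 : 0 ≤ ∫ ω, Real.exp (-ψ ω) * D.p μ ω ∂P :=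
    integral_nonneg fun ω => (mul_pos (Real.exp_pos _) (D.p_pos μ hμ ω)).le
  have amgm : ∀ t : ℝ, 0 < t → 2 ≤ t * (∫ ω, Real.exp (ψ ω) * D.p μ ω ∂P)
      + t⁻¹ * ∫ ω, Real.exp (-ψ ω) * D.p μ ω ∂P := by
    intro t ht
    have hle : ∫ ω, 2 * D.p μ ω ∂P ≤ ∫ ω, (t * (Real.exp (ψ ω) * D.p μ ω)
        + t⁻¹ * (Real.exp (-ψ ω) * D.p μ ω)) ∂P := by
      refine integral_mono (hp.const_mul 2) ((ha.const_mul t).add (hb.const_mul t⁻¹)) fun ω => ?_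
      have h1 : 0 < t * Real.exp (ψ ω) := mul_pos ht (Real.exp_pos _)
      have h2 : t⁻¹ * Real.exp (-ψ ω) = (t * Real.exp (ψ ω))⁻¹ := by
        rw [Real.exp_neg, mul_inv]
      have h3 : 2 ≤ t * Real.exp (ψ ω) + t⁻¹ * Real.exp (-ψ ω) := by
        rw [h2]
        have h4 := mul_inv_cancel₀ h1.ne'
        nlinarith [sq_nonneg (t * Real.exp (ψ ω) - 1), inv_pos.2 h1,
          mul_nonneg (inv_pos.2 h1).le (sq_nonneg (t * Real.exp (ψ ω) - 1))]
      have h5 := mul_le_mul_of_nonneg_right h3 (D.p_pos μ hμ ω).le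
      simp only
      linarith
    rwa [integral_add (ha.const_mul t) (hb.const_mul t⁻¹), integral_const_mul,
      integral_const_mul, integral_const_mul, D.p_prob μ hμ, mul_one] at hle
  generalize (∫ ω, Real.exp (ψ ω) * D.p μ ω ∂P) = a at *
  generalize (∫ ω, Real.exp (-ψ ω) * D.p μ ω ∂P) = b at *
  have ha1 : 0 < a := by
    rcases ha0.lt_or_eq with h | h
    · exact h
    · have h1 := amgm (b + 1) (by linarith)
      have h2 : (b + 1)⁻¹ * b ≤ 1 := by
        rw [inv_mul_le_iff₀ (by linarith)]; linarith
      rw [← h] at h1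
      linarith
  have hab : 1 ≤ a * b := by
    have h := amgm a⁻¹ (inv_pos.2 ha1)
    rw [inv_mul_cancel₀ ha1.ne', inv_inv] at h
    linarith
  have hb1 : 0 < b := by
    rcases hb0.lt_or_eq with h | h
    · exact h
    · rw [← h, mul_zero] at hab; linarith
  rw [← Real.log_mul ha1.ne' hb1.ne']
  exact Real.log_nonneg hab

lemma div_mem (D : GoodPair Ω P E) {φ : Ω → ℝ} (hφ : φ ∈ D.F) (α : ℝ) :
    (fun ω => φ ω / α) ∈ D.F := by
  convert D.F.smul_mem α⁻¹ hφ using 1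
  ext ω
  simp [div_eq_inv_mul]

end GoodPair

/-- On the diagonal, `Φ_r(x, x; φ, α) ≥ 2αr`. -/
lemma le_PhiFun_self (D : GoodPair Ω P E) (A : (Fin n → ℝ) →ᵃ[ℝ] E) (g : Fin n → ℝ)
    (r : ℝ) {x : Fin n → ℝ} (hx : A x ∈ D.M) {φ : Ω → ℝ} (hφ : φ ∈ D.F) {α : ℝ} (hα : 0 < α) :
    2 * α * r ≤ PhiFun D A g r x x φ α := by
  have h := mul_nonneg hα.le (D.log_integral_exp_add_nonneg hx (D.div_mem hφ α))
  simp only [← neg_div] at h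
  unfold PhiFun
  linarith

lemma PhiFun_eq_zero_add (D : GoodPair Ω P E) (A : (Fin n → ℝ) →ᵃ[ℝ] E) (g : Fin n → ℝ)
    (r : ℝ) (x y : Fin n → ℝ) (φ : Ω → ℝ) (α : ℝ) :
    PhiFun D A g r x y φ α = PhiFun D A g 0 x y φ α + 2 * α * r := by
  simp [PhiFun]

lemma bddAbove_PhiFun [FiniteDimensional ℝ E] (D : GoodPair Ω P E)
    (A : (Fin n → ℝ) →ᵃ[ℝ] E) (g : Fin n → ℝ) (r : ℝ) {X : Set (Fin n → ℝ)}
    (hX : IsCompact X) (hA : ∀ x ∈ X, A x ∈ D.M) {φ : Ω → ℝ} (hφ : φ ∈ D.F) (α : ℝ) :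
    BddAbove {w : ℝ | ∃ x ∈ X, ∃ y ∈ X, w = PhiFun D A g r x y φ α} := by
  have hcont : ∀ ψ ∈ D.F, ContinuousOn
      (fun x => Real.log (∫ ω, Real.exp (ψ ω) * D.p (A x) ω ∂P)) X := fun ψ hψ =>
    ((D.F_concave ψ hψ).continuousOn D.M_open).comp
      A.continuous_of_finiteDimensional.continuousOn hA
  have h1 := hcont _ (D.div_mem hφ α)
  have h2 := hcont _ (D.div_mem (D.F.neg_mem hφ) α)
  have hg : Continuous fun x : Fin n → ℝ => g ⬝ᵥ x := by
    unfold dotProduct; fun_prop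
  have hΦ : ContinuousOn (fun z : (Fin n → ℝ) × (Fin n → ℝ) => PhiFun D A g r z.1 z.2 φ α)
      (X ×ˢ X) := by
    unfold PhiFun
    have h1' := h1.comp continuousOn_snd (fun z (hz : z ∈ X ×ˢ X) => hz.2)
    have h2' := h2.comp continuousOn_fst (fun z (hz : z ∈ X ×ˢ X) => hz.1)
    exact ((((hg.comp continuous_fst).sub (hg.comp continuous_snd)).continuousOn.add
      (h1'.const_mul α)).add (h2'.const_mul α)).add continuousOn_const
  refine ((hX.prod hX).bddAbove_image hΦ).mono ?_
  rintro w ⟨x, hx, y, hy, rfl⟩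
  exact ⟨(x, y), ⟨hx, hy⟩, rfl⟩

/-- The inner supremum `sup_{x,y ∈ X} Φ_r(x, y; φ, α)` is at least `2αr`. -/
lemma le_sSup_PhiFun [FiniteDimensional ℝ E] (D : GoodPair Ω P E)
    (A : (Fin n → ℝ) →ᵃ[ℝ] E) (g : Fin n → ℝ) (r : ℝ) {X : Set (Fin n → ℝ)}
    (hne : X.Nonempty) (hX : IsCompact X) (hA : ∀ x ∈ X, A x ∈ D.M)
    {φ : Ω → ℝ} (hφ : φ ∈ D.F) {α : ℝ} (hα : 0 < α) :
    2 * α * r ≤ sSup {w : ℝ | ∃ x ∈ X, ∃ y ∈ X, w = PhiFun D A g r x y φ α} := by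
  obtain ⟨x, hx⟩ := hne
  exact (le_PhiFun_self D A g r (hA x hx) hφ hα).trans
    (le_csSup (bddAbove_PhiFun D A g r hX hA hφ α) ⟨x, hx, x, hx, rfl⟩)

lemma bddBelow_sSup_PhiFun [FiniteDimensional ℝ E] (D : GoodPair Ω P E)
    (A : (Fin n → ℝ) →ᵃ[ℝ] E) (g : Fin n → ℝ) {r : ℝ} (hr : 0 ≤ r) {X : Set (Fin n → ℝ)}
    (hne : X.Nonempty) (hX : IsCompact X) (hA : ∀ x ∈ X, A x ∈ D.M) :
    BddBelow {v : ℝ | ∃ φ ∈ D.F, ∃ α : ℝ, 0 < α ∧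
      v = sSup {w : ℝ | ∃ x ∈ X, ∃ y ∈ X, w = PhiFun D A g r x y φ α}} := by
  refine ⟨0, ?_⟩
  rintro v ⟨φ, hφ, α, hα, rfl⟩
  exact (by positivity : 0 ≤ 2 * α * r).trans (le_sSup_PhiFun D A g r hne hX hA hφ hα)

lemma PhiStarIS_mono [FiniteDimensional ℝ E] (D : GoodPair Ω P E)
    (A : (Fin n → ℝ) →ᵃ[ℝ] E) (g : Fin n → ℝ) {r : ℝ} (hr : 0 ≤ r) {X Y : Set (Fin n → ℝ)}
    (hXY : X ⊆ Y) (hne : X.Nonempty) (hX : IsCompact X) (hY : IsCompact Y)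
    (hA : ∀ x ∈ Y, A x ∈ D.M) :
    PhiStarIS D A g X r ≤ PhiStarIS D A g Y r := by
  unfold PhiStarIS
  refine mul_le_mul_of_nonneg_left ?_ (by norm_num)
  refine le_csInf ⟨_, 0, D.F.zero_mem, 1, one_pos, rfl⟩ ?_
  rintro v ⟨φ, hφ, α, hα, rfl⟩
  refine (csInf_le (bddBelow_sSup_PhiFun D A g hr hne hX fun x hx => hA x (hXY hx))
    ⟨φ, hφ, α, hα, rfl⟩).trans (csSup_le_csSup (bddAbove_PhiFun D A g r hY hA hφ α) ?_ ?_)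
  · obtain ⟨x, hx⟩ := hne
    exact ⟨_, x, hx, x, hx, rfl⟩
  · rintro w ⟨x, hx, y, hy, rfl⟩
    exact ⟨x, hXY hx, y, hXY hy, rfl⟩

/-- Concavity of `Φ_*` together with `Φ_*(0) ≥ 0`, in the form `Φ_*(θr) ≤ θ Φ_*(r)`, `θ ≥ 1`. -/
lemma PhiStarIS_mul_le [FiniteDimensional ℝ E] (D : GoodPair Ω P E)
    (A : (Fin n → ℝ) →ᵃ[ℝ] E) (g : Fin n → ℝ) {r θ : ℝ} (hr : 0 ≤ r) (hθ : 1 ≤ θ)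
    {X : Set (Fin n → ℝ)} (hne : X.Nonempty) (hX : IsCompact X) (hA : ∀ x ∈ X, A x ∈ D.M) :
    PhiStarIS D A g X (θ * r) ≤ θ * PhiStarIS D A g X r := by
  have hθ0 : 0 < θ := by linarith
  unfold PhiStarIS
  rw [mul_left_comm]
  refine mul_le_mul_of_nonneg_left ?_ (by norm_num)
  rw [← div_le_iff₀' hθ0]
  refine le_csInf ⟨_, 0, D.F.zero_mem, 1, one_pos, rfl⟩ ?_
  rintro v ⟨φ, hφ, α, hα, rfl⟩
  rw [div_le_iff₀' hθ0]
  refine (csInf_le (bddBelow_sSup_PhiFun D A g (by positivity) hne hX hA)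
    ⟨φ, hφ, α, hα, rfl⟩).trans (csSup_le ?_ ?_)
  · obtain ⟨x, hx⟩ := hne
    exact ⟨_, x, hx, x, hx, rfl⟩
  · rintro w ⟨x, hx, y, hy, rfl⟩
    have h1 := le_csSup (bddAbove_PhiFun D A g r hX hA hφ α) ⟨x, hx, y, hy, rfl⟩
    have h2 := le_sSup_PhiFun D A g r hne hX hA hφ hα
    rw [PhiFun_eq_zero_add] at h1 ⊢
    nlinarith

/-- Deterministic oracle inequality for the adaptive estimate: if all component estimates from
index `k` on are accurate up to their thresholds, so is the adaptive one, up to a factor `3`. -/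
lemma abs_adaptEst_sub_le {Ω' : Type*} {K k : ℕ} {ghatk : ℕ → Ω' → ℝ} {thresh : ℕ → ℝ}
    {δ v : ℝ} {ω : Ω'} (hk : k < K) (hmono : ∀ j ≤ k, thresh j ≤ thresh k)
    (hacc : ∀ j, k ≤ j → j < K → |ghatk j ω - v| ≤ thresh j + δ) :
    |adaptEst K ghatk thresh δ ω - v| ≤ 3 * thresh k + 3 * δ := by
  have hgood : k ∈ {k | isGoodIdx K ghatk thresh δ ω k} := by
    refine ⟨hk, fun j hkj hj => ?_⟩
    have h1 := abs_le.1 (hacc j hkj hj)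
    have h2 := abs_le.1 (hacc k le_rfl hk)
    rw [abs_le]
    constructor <;> linarith
  have hle : kSel K ghatk thresh δ ω ≤ k := Nat.sInf_le hgood
  have hsel : isGoodIdx K ghatk thresh δ ω (kSel K ghatk thresh δ ω) := Nat.sInf_mem ⟨k, hgood⟩
  have h1 := abs_le.1 (hsel.2 k hle hk)
  have h2 := abs_le.1 (hacc k le_rfl hk)
  have h3 := hmono _ hle
  unfold adaptEst
  rw [abs_le]
  constructor <;> linarith

/-- **Proposition 5.1, bound (5.2).** For nested convex compact sets
`X⁰ ⊆ ⋯ ⊆ X^{K-1}` and component estimates `ĝ^k` whose `(ε/K)`-deviation over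
`X^k` exceeds `Φ_*^k(ln(2K/ε)) + δ` with probability `< ε/K`, the adaptive
estimate `ĝ(ω) = ĝ^{k(ω)}(ω)` satisfies, for every `k < K`,
`sup_{x∈X^k} Prob{|ĝ(ω) − gᵀx| > ϑ·Φ_*^k(ln(2/ε)) + 3δ} < ε` with
`ϑ = 3 ln(2K/ε)/ln(2/ε)`. -/
theorem adaptive_estimate_deviation
    {Ω : Type*} [MeasurableSpace Ω] [TopologicalSpace Ω] [PolishSpace Ω] [BorelSpace Ω]
    {P : Measure Ω} [SigmaFinite P] {m n : ℕ}
    (D : GoodPair Ω P (Fin m → ℝ))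
    (K : ℕ) (hK : 1 ≤ K) (Xs : ℕ → Set (Fin n → ℝ))
    (hXne : ∀ k < K, (Xs k).Nonempty) (hXcp : ∀ k < K, IsCompact (Xs k))
    (hXcv : ∀ k < K, Convex ℝ (Xs k))
    (hnest : ∀ k k', k ≤ k' → k' < K → Xs k ⊆ Xs k')
    (A : (Fin n → ℝ) →ᵃ[ℝ] (Fin m → ℝ)) (hA : ∀ x ∈ Xs (K - 1), A x ∈ D.M)
    (g : Fin n → ℝ) (ε : ℝ) (hε : ε ∈ Set.Ioo (0 : ℝ) (1/4)) (δ : ℝ) (hδ : 0 < δ)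
    (ghatk : ℕ → Ω → ℝ) (hmeas : ∀ k < K, Measurable (ghatk k))
    (hrisk : ∀ k < K,
      (⨆ x ∈ Xs k, obsMeasure D (A x)
          {ω | PhiStarIS D A g (Xs k) (Real.log (2 * K / ε)) + δ < |ghatk k ω - g ⬝ᵥ x|})
        < ENNReal.ofReal (ε / K)) :
    ∀ k < K,
      (⨆ x ∈ Xs k, obsMeasure D (A x)
          {ω | (3 * Real.log (2 * K / ε) / Real.log (2 / ε)) *
                PhiStarIS D A g (Xs k) (Real.log (2 / ε)) + 3 * δ
              < |adaptEst K ghatk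
                  (fun j => PhiStarIS D A g (Xs j) (Real.log (2 * K / ε))) δ ω - g ⬝ᵥ x|})
        < ENNReal.ofReal ε := by
  intro k hk
  obtain ⟨hε0, hε1⟩ := hε
  have hK0 : (1 : ℝ) ≤ K := by exact_mod_cast hK
  have hAk : ∀ j < K, ∀ x ∈ Xs j, A x ∈ D.M := fun j hj x hx =>
    hA x (hnest j (K - 1) (by omega) (by omega) hx)
  have hr : 0 < Real.log (2 / ε) := Real.log_pos (by rw [lt_div_iff₀ hε0]; linarith)
  have hrK : Real.log (2 / ε) ≤ Real.log (2 * K / ε) :=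
    Real.log_le_log (by positivity) (by gcongr; linarith)
  have hmono : ∀ j ≤ k, PhiStarIS D A g (Xs j) (Real.log (2 * K / ε))
      ≤ PhiStarIS D A g (Xs k) (Real.log (2 * K / ε)) := fun j hj =>
    PhiStarIS_mono D A g (hr.le.trans hrK) (hnest j k hj hk) (hXne j (by omega))
      (hXcp j (by omega)) (hXcp k hk) (hAk k hk)
  have hscale : 3 * PhiStarIS D A g (Xs k) (Real.log (2 * K / ε))
      ≤ 3 * Real.log (2 * K / ε) / Real.log (2 / ε)
        * PhiStarIS D A g (Xs k) (Real.log (2 / ε)) := by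
    have h := PhiStarIS_mul_le D A g hr.le ((one_le_div hr).2 hrK) (hXne k hk) (hXcp k hk)
      (hAk k hk)
    rw [div_mul_cancel₀ _ hr.ne'] at h
    rw [mul_div_assoc 3, mul_assoc 3]
    linarith
  calc _ ≤ ∑ j ∈ Finset.Ico k K, ⨆ x ∈ Xs j, obsMeasure D (A x)
          {ω | PhiStarIS D A g (Xs j) (Real.log (2 * K / ε)) + δ < |ghatk j ω - g ⬝ᵥ x|} := by
        refine iSup₂_le fun x hx => ?_
        have hsub : {ω | (3 * Real.log (2 * K / ε) / Real.log (2 / ε)) *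
                PhiStarIS D A g (Xs k) (Real.log (2 / ε)) + 3 * δ
              < |adaptEst K ghatk
                  (fun j => PhiStarIS D A g (Xs j) (Real.log (2 * K / ε))) δ ω - g ⬝ᵥ x|}
            ⊆ ⋃ j ∈ Finset.Ico k K, {ω | PhiStarIS D A g (Xs j) (Real.log (2 * K / ε)) + δ
              < |ghatk j ω - g ⬝ᵥ x|} := by
          intro ω hω
          by_contra hnot
          simp only [Finset.mem_Ico, mem_iUnion, mem_ofPred_eq, exists_prop, not_exists, not_and,
            not_lt, and_imp] at hnot
          have h := abs_adaptEst_sub_le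
            (thresh := fun j => PhiStarIS D A g (Xs j) (Real.log (2 * K / ε))) hk hmono hnot
          rw [mem_ofPred_eq] at hω
          linarith
        refine (measure_mono hsub).trans ((measure_biUnion_finset_le _ _).trans
          (Finset.sum_le_sum fun j hj => ?_))
        rw [Finset.mem_Ico] at hj
        exact le_iSup₂_of_le (f := fun x (_ : x ∈ Xs j) => obsMeasure D (A x)
          {ω | PhiStarIS D A g (Xs j) (Real.log (2 * K / ε)) + δ < |ghatk j ω - g ⬝ᵥ x|})
          x (hnest k j hj.1 hj.2 hx) le_rfl
    _ < ∑ j ∈ Finset.Ico k K, ENNReal.ofReal (ε / K) :=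
        ENNReal.sum_lt_sum_of_nonempty (by simpa using hk)
          fun j hj => hrisk j (Finset.mem_Ico.1 hj).2
    _ ≤ ENNReal.ofReal ε := by
        rw [Finset.sum_const, Nat.card_Ico, nsmul_eq_mul, ← ENNReal.ofReal_natCast,
          ← ENNReal.ofReal_mul (by positivity)]
        refine ENNReal.ofReal_le_ofReal ?_
        have h1 : ((K - k : ℕ) : ℝ) ≤ K := by exact_mod_cast Nat.sub_le K k
        calc ((K - k : ℕ) : ℝ) * (ε / K) ≤ K * (ε / K) := by gcongr
          _ = ε := by field_simp
end
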